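/- Under the standing assumption, for every E ∈ ℝ and every N ≥ 1 the operator a_N^E + i b_N^E is invertible, so the Prüfer phase U_N^E = (a_N^E − i b_N^E)(a_N^E + i b_N^E)⁻¹ is well defined, and U_N^E is a unitary operator on H. -/

import Mathlib

open ContinuousLinearMap

noncomputable section

variable {H : Type*} [NormedAddCommGroup H] [InnerProductSpace ℂ H] [CompleteSpace H]

/-- The Hilbert space `K = H ⊕ H` (with the `ℓ²` product norm). -/
abbrev Kspace (H : Type*) [NormedAddCommGroup H] [InnerProductSpace ℂ H] : Type _ :=
  WithLp 2 (H × H)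

/-- The block operator `[[A,B],[C,D]]` on `K`, acting by `(x,y) ↦ (Ax + By, Cx + Dy)`. -/
def blockOp (A B C D : H →L[ℂ] H) : Kspace H →L[ℂ] Kspace H :=
  (((WithLp.prodContinuousLinearEquiv 2 ℂ H H).symm : (H × H) →L[ℂ] Kspace H)) ∘L
    (((A ∘L ContinuousLinearMap.fst ℂ H H) + (B ∘L ContinuousLinearMap.snd ℂ H H)).prod
      ((C ∘L ContinuousLinearMap.fst ℂ H H) + (D ∘L ContinuousLinearMap.snd ℂ H H))) ∘L
    (((WithLp.prodContinuousLinearEquiv 2 ℂ H H) : Kspace H →L[ℂ] H × H))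

/-- Upper-left block of an operator on `K`. -/
def blkA (M : Kspace H →L[ℂ] Kspace H) : H →L[ℂ] H :=
  ContinuousLinearMap.fst ℂ H H ∘L
    ((WithLp.prodContinuousLinearEquiv 2 ℂ H H) : Kspace H →L[ℂ] H × H) ∘L M ∘L
    ((WithLp.prodContinuousLinearEquiv 2 ℂ H H).symm : (H × H) →L[ℂ] Kspace H) ∘L
    ContinuousLinearMap.inl ℂ H H

/-- Upper-right block of an operator on `K`. -/
def blkB (M : Kspace H →L[ℂ] Kspace H) : H →L[ℂ] H :=
  ContinuousLinearMap.fst ℂ H H ∘L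
    ((WithLp.prodContinuousLinearEquiv 2 ℂ H H) : Kspace H →L[ℂ] H × H) ∘L M ∘L
    ((WithLp.prodContinuousLinearEquiv 2 ℂ H H).symm : (H × H) →L[ℂ] Kspace H) ∘L
    ContinuousLinearMap.inr ℂ H H

/-- Lower-left block of an operator on `K`. -/
def blkC (M : Kspace H →L[ℂ] Kspace H) : H →L[ℂ] H :=
  ContinuousLinearMap.snd ℂ H H ∘L
    ((WithLp.prodContinuousLinearEquiv 2 ℂ H H) : Kspace H →L[ℂ] H × H) ∘L M ∘L
    ((WithLp.prodContinuousLinearEquiv 2 ℂ H H).symm : (H × H) →L[ℂ] Kspace H) ∘L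
    ContinuousLinearMap.inl ℂ H H

/-- Lower-right block of an operator on `K`. -/
def blkD (M : Kspace H →L[ℂ] Kspace H) : H →L[ℂ] H :=
  ContinuousLinearMap.snd ℂ H H ∘L
    ((WithLp.prodContinuousLinearEquiv 2 ℂ H H) : Kspace H →L[ℂ] H × H) ∘L M ∘L
    ((WithLp.prodContinuousLinearEquiv 2 ℂ H H).symm : (H × H) →L[ℂ] Kspace H) ∘L
    ContinuousLinearMap.inr ℂ H H

/-- The Cayley transform `C = (1/√2)[[1, -i],[1, i]]`. -/
def Cayley (H : Type*) [NormedAddCommGroup H] [InnerProductSpace ℂ H] [CompleteSpace H] :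
    Kspace H →L[ℂ] Kspace H :=
  blockOp (((Real.sqrt 2 : ℂ)⁻¹) • 1) ((-((Real.sqrt 2 : ℂ)⁻¹ * Complex.I)) • 1)
    (((Real.sqrt 2 : ℂ)⁻¹) • 1) ((((Real.sqrt 2 : ℂ)⁻¹ * Complex.I)) • 1)

/-- The transfer operator `M^E = [[(E − V)T⁻¹, −T*],[T⁻¹, 0]]`, where the inverse `T⁻¹`
is given as the operator `Tinv`. -/
def transferOp (E : ℝ) (V T Tinv : H →L[ℂ] H) : Kspace H →L[ℂ] Kspace H :=
  blockOp ((((E : ℂ) • (1 : H →L[ℂ] H)) - V) ∘L Tinv) (-(adjoint T)) Tinv 0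

/-- The product of transfer operators `M_N^E ⋯ M_1^E` (empty product for `N = 0`). -/
def transferProd (V T Tinv : ℕ → H →L[ℂ] H) (E : ℝ) : ℕ → (Kspace H →L[ℂ] Kspace H)
  | 0 => 1
  | n + 1 => transferOp E (V (n + 1)) (T (n + 1)) (Tinv (n + 1)) ∘L transferProd V T Tinv E n

/-- `a_N^E`: the upper-left block of `M_N^E ⋯ M_1^E`, so that
`(a_N^E x, b_N^E x) = M_N^E ⋯ M_1^E (x, 0)`. -/
def pruferA (V T Tinv : ℕ → H →L[ℂ] H) (N : ℕ) (E : ℝ) : H →L[ℂ] H :=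
  blkA (transferProd V T Tinv E N)

/-- `b_N^E`: the lower-left block of `M_N^E ⋯ M_1^E`. -/
def pruferB (V T Tinv : ℕ → H →L[ℂ] H) (N : ℕ) (E : ℝ) : H →L[ℂ] H :=
  blkC (transferProd V T Tinv E N)

/-- The Prüfer phase `U_N^E = (a_N^E − i b_N^E)(a_N^E + i b_N^E)⁻¹`. -/
def pruferU (V T Tinv : ℕ → H →L[ℂ] H) (N : ℕ) (E : ℝ) : H →L[ℂ] H :=
  (pruferA V T Tinv N E - Complex.I • pruferB V T Tinv N E) *
    Ring.inverse (pruferA V T Tinv N E + Complex.I • pruferB V T Tinv N E)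

/-! The transfer operators are `I`-unitary, hence so is their product `N = [[a, b], [c, d]]`, where
`a = a_N^E` and `c = b_N^E`. Put `w = a + i c`, `v = a - i c` and `z = b + i d`. The identity
`N* I N = I` gives `v* v = w* w`, so `v w⁻¹` is unitary once `v` and `w` are invertible.

The identity `N I N* = I` says that `i w z*` has real part `1`. Such an element is invertible,
because self-adjoint elements have real spectrum, so `w` has a right inverse `r`. Then `1 - r w` is
annihilated by `w`, hence also by `v` since `v* v = w* w`, hence by `a` and `c`; and `a`, `c`
generate the unit left ideal because `d* a - b* c = 1`. So `r` is a two-sided inverse. Changing the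
signs of `b` and `c` exchanges `w` and `v`.
-/

section CStarAlgebra

variable {A : Type*} [CStarAlgebra A]

theorem isUnit_of_add_star_eq_smul_one {t : A} {r : ℝ} (hr : r ≠ 0)
    (ht : t + star t = (r : ℂ) • (1 : A)) : IsUnit t := by
  -- `I • (t - star t)` is self-adjoint, so its spectrum is real and misses `-I * r`.
  have hs : IsSelfAdjoint (Complex.I • (t - star t)) := by
    rw [isSelfAdjoint_iff, star_smul, star_sub, star_star, Complex.star_def, Complex.conj_I,
      neg_smul, ← smul_neg, neg_sub]
  have hnotMem : -Complex.I * r ∉ spectrum ℂ (Complex.I • (t - star t)) :=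
    fun h => hr <| by simpa using hs.im_eq_zero_of_mem_spectrum h
  have ht' : (-Complex.I * r) • (1 : A) - Complex.I • (t - star t) = (-2 * Complex.I) • t := by
    rw [mul_smul, ← ht]
    module
  rw [spectrum.notMem_iff, Algebra.algebraMap_eq_smul_one, ht'] at hnotMem
  exact (isUnit_smul_iff (Units.mk0 (-2 * Complex.I) (by simp)) t).mp hnotMem

end CStarAlgebra

theorem isUnit_of_mul_eq_one_of_star_mul_self_eq {R : Type*} [NormedRing R] [StarRing R]
    [CStarRing R] {p q v w r : R} (hr : w * r = 1) (hvw : star v * v = star w * w)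
    (hpq : p * w + q * v = 1) : IsUnit w := by
  have hw : w * (1 - r * w) = 0 := by rw [mul_sub, ← mul_assoc, hr, one_mul, mul_one, sub_self]
  have hv : v * (1 - r * w) = 0 := by
    rw [← CStarRing.star_mul_self_eq_zero_iff, star_mul, mul_assoc, ← mul_assoc (star v), hvw,
      mul_assoc, hw, mul_zero, mul_zero]
  have hrw : 1 - r * w = 0 :=
    calc 1 - r * w = (p * w + q * v) * (1 - r * w) := by rw [hpq, one_mul]
      _ = 0 := by rw [add_mul, mul_assoc, mul_assoc, hw, hv, mul_zero, mul_zero, add_zero]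
  exact isUnit_iff_exists.mpr ⟨r, hr, (sub_eq_zero.mp hrw).symm⟩

theorem mul_inverse_mem_unitary {R : Type*} [MonoidWithZero R] [StarMul R] {v w : R}
    (hv : IsUnit v) (hw : IsUnit w) (hvw : star v * v = star w * w) :
    v * Ring.inverse w ∈ unitary R := by
  refine (hv.mul hw.ringInverse).mem_unitary_of_star_mul_self ?_
  calc star (v * Ring.inverse w) * (v * Ring.inverse w)
      = star (Ring.inverse w) * (star v * v) * Ring.inverse w := by simp only [star_mul, mul_assoc]
    _ = star (w * Ring.inverse w) * (w * Ring.inverse w) := by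
        simp only [hvw, star_mul, mul_assoc]
    _ = 1 := by rw [Ring.mul_inverse_cancel w hw, star_one, one_mul]

/-- The matrix of the skew form `I` whose isometries are the `I`-unitary operators. -/
def skewForm (A : Type*) [Ring A] : Matrix (Fin 2) (Fin 2) A := !![0, -1; 1, 0]

/-- The `I`-unitary `2 × 2` matrices over a star ring. Invertibility is encoded by the second
identity: as `I ^ 2 = -1`, the two identities together say that `-I * star N * I` is a two-sided
inverse of `N`. -/
def iUnitary (A : Type*) [Ring A] [StarRing A] : Submonoid (Matrix (Fin 2) (Fin 2) A) where
  carrier := {N | star N * skewForm A * N = skewForm A ∧ N * skewForm A * star N = skewForm A}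
  one_mem' := by simp
  mul_mem' {M N} hM hN := by
    constructor
    · calc star (M * N) * skewForm A * (M * N)
          = star N * (star M * skewForm A * M) * N := by simp only [star_mul, mul_assoc]
        _ = skewForm A := by rw [hM.1, hN.1]
    · calc M * N * skewForm A * star (M * N)
          = M * (N * skewForm A * star N) * star M := by simp only [star_mul, mul_assoc]
        _ = skewForm A := by rw [hN.2, hM.2]

namespace iUnitary

section StarRing

variable {A : Type*} [Ring A] [StarRing A] {a b c d : A}

theorem star_mul_skewForm_mul_eq_iff :
    star !![a, b; c, d] * skewForm A * !![a, b; c, d] = skewForm A ↔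
      star a * c = star c * a ∧ star b * d = star d * b ∧ star d * a - star b * c = 1 := by
  have hprod : star !![a, b; c, d] * skewForm A * !![a, b; c, d] =
      !![star c * a - star a * c, star c * b - star a * d;
        star d * a - star b * c, star d * b - star b * d] := by
    ext i j
    fin_cases i <;> fin_cases j <;>
      simp [skewForm, Matrix.mul_apply, Matrix.star_apply, ← sub_eq_add_neg]
  have hdet : star c * b - star a * d = -1 ↔ star d * a - star b * c = 1 := by
    rw [← star_inj, star_neg, star_one, ← neg_inj]
    simp
  rw [hprod, skewForm, ← Matrix.ext_iff]
  simp only [Fin.forall_fin_two, Matrix.of_apply, Matrix.cons_val_zero, Matrix.cons_val_one,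
    Matrix.cons_val', Matrix.cons_val_fin_one, hdet, sub_eq_zero]
  tauto

theorem fin_two_mem_iff : !![a, b; c, d] ∈ iUnitary A ↔
    (star a * c = star c * a ∧ star b * d = star d * b ∧ star d * a - star b * c = 1) ∧
      a * star b = b * star a ∧ c * star d = d * star c ∧ d * star a - c * star b = 1 := by
  have hstar : star !![a, b; c, d] = !![star a, star c; star b, star d] := by
    ext i j
    fin_cases i <;> fin_cases j <;> rfl
  have hright : !![a, b; c, d] * skewForm A * star !![a, b; c, d] = skewForm A ↔
      a * star b = b * star a ∧ c * star d = d * star c ∧ d * star a - c * star b = 1 := by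
    simpa only [← hstar, star_star] using star_mul_skewForm_mul_eq_iff (a := star a) (b := star c)
      (c := star b) (d := star d)
  exact and_congr star_mul_skewForm_mul_eq_iff hright

theorem neg_offDiag_mem (h : !![a, b; c, d] ∈ iUnitary A) : !![a, -b; -c, d] ∈ iUnitary A := by
  rw [fin_two_mem_iff] at h ⊢
  simpa using h

theorem transferMatrix_mem {S T R : A} (hS : IsSelfAdjoint S) (hTR : T * R = 1) (hRT : R * T = 1) :
    !![S * R, -star T; R, 0] ∈ iUnitary A := by
  have hRTS : star T * (star R * S) = S := by rw [← mul_assoc, ← star_mul, hRT, star_one, one_mul]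
  rw [fin_two_mem_iff]
  simp [hS.star_eq, hTR, hRT, hRTS, mul_assoc]

end StarRing

section CStarAlgebra

variable {A : Type*} [CStarAlgebra A] {a b c d : A}

theorem star_sub_mul_self_eq (h : star a * c = star c * a) :
    star (a - Complex.I • c) * (a - Complex.I • c) =
      star (a + Complex.I • c) * (a + Complex.I • c) := by
  simp only [star_add, star_sub, star_smul, Complex.star_def, Complex.conj_I, neg_smul, add_mul,
    sub_mul, neg_mul, mul_add, mul_sub, smul_mul_assoc, mul_smul_comm, h]
  module

theorem exists_add_I_smul_mul_eq_one (h : !![a, b; c, d] ∈ iUnitary A) :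
    ∃ r, (a + Complex.I • c) * r = 1 := by
  obtain ⟨-, hab, hcd, hda⟩ := fin_two_mem_iff.mp h
  have had : a * star d - b * star c = 1 := by simpa using congrArg star hda
  have hre : Complex.I • ((a + Complex.I • c) * star (b + Complex.I • d)) +
      star (Complex.I • ((a + Complex.I • c) * star (b + Complex.I • d))) =
      ((2 : ℝ) : ℂ) • (1 : A) := by
    simp only [star_add, star_mul, star_star, star_smul, star_neg, Complex.star_def, Complex.conj_I,
      neg_smul, neg_neg, add_mul, mul_neg, mul_add, smul_mul_assoc, mul_smul_comm, hab, hcd]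
    linear_combination (norm := module) hda + had + Complex.I_mul_I •
      (b * star c + c * star b - a * star d - d * star a)
  obtain ⟨r, hr⟩ := (isUnit_of_add_star_eq_smul_one two_ne_zero hre).exists_right_inv
  exact ⟨Complex.I • (star (b + Complex.I • d) * r), by
    rw [mul_smul_comm, ← mul_assoc, ← smul_mul_assoc, hr]⟩

theorem isUnit_add_I_smul (h : !![a, b; c, d] ∈ iUnitary A) : IsUnit (a + Complex.I • c) := by
  obtain ⟨⟨hac, -, hdet⟩, -⟩ := fin_two_mem_iff.mp h
  obtain ⟨r, hr⟩ := exists_add_I_smul_mul_eq_one h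
  have hpq : ((1 / 2 : ℂ) • (star d + Complex.I • star b)) * (a + Complex.I • c) +
      ((1 / 2 : ℂ) • (star d - Complex.I • star b)) * (a - Complex.I • c) = 1 := by
    simp only [add_mul, mul_add, sub_mul, mul_sub, smul_mul_assoc, mul_smul_comm]
    linear_combination (norm := module) hdet + Complex.I_mul_I • (star b * c)
  exact isUnit_of_mul_eq_one_of_star_mul_self_eq hr (star_sub_mul_self_eq hac) hpq

theorem isUnit_sub_I_smul (h : !![a, b; c, d] ∈ iUnitary A) : IsUnit (a - Complex.I • c) := by
  simpa [sub_eq_add_neg] using isUnit_add_I_smul (neg_offDiag_mem h)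

theorem sub_mul_inverse_mem_unitary (h : !![a, b; c, d] ∈ iUnitary A) :
    (a - Complex.I • c) * Ring.inverse (a + Complex.I • c) ∈ unitary A :=
  mul_inverse_mem_unitary (isUnit_sub_I_smul h) (isUnit_add_I_smul h)
    (star_sub_mul_self_eq (fin_two_mem_iff.mp h).1.1)

end CStarAlgebra

end iUnitary

/-- The block decomposition of operators on `K`, as a multiplicative map to `2 × 2` matrices over
`H →L[ℂ] H`. It turns `I`-unitarity of operators on `K` into membership in `iUnitary`. -/
def blockMatrix : (Kspace H →L[ℂ] Kspace H) →* Matrix (Fin 2) (Fin 2) (H →L[ℂ] H) where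
  toFun M := !![blkA M, blkB M; blkC M, blkD M]
  map_one' := by
    ext i j x
    fin_cases i <;> fin_cases j <;> simp [blkA, blkB, blkC, blkD]
  map_mul' M N := by
    have hadd (x y : H) : WithLp.toLp 2 (x, y) = WithLp.toLp 2 (x, 0) + WithLp.toLp 2 (0, y) := by
      simp [← WithLp.toLp_add]
    have hsplit (z : Kspace H) :
        M z = M (WithLp.toLp 2 (z.fst, 0)) + M (WithLp.toLp 2 (0, z.snd)) := by
      rw [← map_add, ← hadd]
      rfl
    ext i j x
    fin_cases i <;> fin_cases j <;>
      simp [blkA, blkB, blkC, blkD, Matrix.mul_apply, ← WithLp.add_fst, ← WithLp.add_snd, ← hsplit]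

omit [CompleteSpace H] in
theorem blockMatrix_blockOp (A B C D : H →L[ℂ] H) :
    blockMatrix (blockOp A B C D) = !![A, B; C, D] := by
  ext i j x
  fin_cases i <;> fin_cases j <;> simp [blockMatrix, blockOp, blkA, blkB, blkC, blkD]

theorem blockMatrix_transferOp_mem {V T Tinv : H →L[ℂ] H} (hV : IsSelfAdjoint V)
    (hT : T ∘L Tinv = 1) (hTinv : Tinv ∘L T = 1) (E : ℝ) :
    blockMatrix (transferOp E V T Tinv) ∈ iUnitary (H →L[ℂ] H) := by
  have hE : IsSelfAdjoint ((E : ℂ) • (1 : H →L[ℂ] H)) := .smul (Complex.conj_ofReal E) (.one _)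
  rw [transferOp, blockMatrix_blockOp]
  exact iUnitary.transferMatrix_mem (hE.sub hV) hT hTinv

theorem blockMatrix_transferProd_mem {V T Tinv : ℕ → H →L[ℂ] H}
    (hV : ∀ n, 1 ≤ n → IsSelfAdjoint (V n))
    (hT : ∀ n, 1 ≤ n → T n ∘L Tinv n = 1 ∧ Tinv n ∘L T n = 1) (E : ℝ) (N : ℕ) :
    blockMatrix (transferProd V T Tinv E N) ∈ iUnitary (H →L[ℂ] H) := by
  induction N with
  | zero =>
    rw [transferProd, map_one]
    exact one_mem _
  | succ n ih =>
    have hn : 1 ≤ n + 1 := n.succ_pos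
    rw [transferProd, ← ContinuousLinearMap.mul_def, map_mul]
    exact mul_mem (blockMatrix_transferOp_mem (hV _ hn) (hT _ hn).1 (hT _ hn).2 E) ih

theorem pruferU_unitary_general {V T Tinv : ℕ → H →L[ℂ] H}
    (hV : ∀ n, 1 ≤ n → IsSelfAdjoint (V n))
    (hT : ∀ n, 1 ≤ n → T n ∘L Tinv n = 1 ∧ Tinv n ∘L T n = 1) (E : ℝ) (N : ℕ) :
    IsUnit (pruferA V T Tinv N E + Complex.I • pruferB V T Tinv N E) ∧
      pruferU V T Tinv N E ∈ unitary (H →L[ℂ] H) := by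
  have hmem := blockMatrix_transferProd_mem hV hT E N
  exact ⟨iUnitary.isUnit_add_I_smul hmem, iUnitary.sub_mul_inverse_mem_unitary hmem⟩

/-- Under the standing assumption, for every `E ∈ ℝ` and `N ≥ 1` the operator
`a_N^E + i b_N^E` is invertible, so the Prüfer phase
`U_N^E = (a_N^E − i b_N^E)(a_N^E + i b_N^E)⁻¹` is well defined, and it is unitary. -/
theorem pruferU_unitary (V T Tinv : ℕ → H →L[ℂ] H) (Λ : ℝ)
    (hV : ∀ n, 1 ≤ n → IsSelfAdjoint (V n))
    (hT : ∀ n, 1 ≤ n → T n ∘L Tinv n = 1 ∧ Tinv n ∘L T n = 1)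
    (hT1 : T 1 = 1) (hTinv1 : Tinv 1 = 1)
    (hΛ : ∀ n, 1 ≤ n → ‖T n‖ ≤ Λ ∧ ‖Tinv n‖ ≤ Λ ∧ ‖V n‖ ≤ Λ)
    (E : ℝ) (N : ℕ) (hN : 1 ≤ N) :
    IsUnit (pruferA V T Tinv N E + Complex.I • pruferB V T Tinv N E) ∧
    pruferU V T Tinv N E ∈ unitary (H →L[ℂ] H) :=
  pruferU_unitary_general hV hT E N
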